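/- Let G and H be finite simple graphs such that the lexicographic product G*H has at least one edge. If γ_P(H) = 1, then Z(G*H) ≤ γ(G)·(Δ(G)|V(H)| + Δ(H)); if γ_P(H) ≥ 2 and G has no isolated vertices, then Z(G*H) ≤ γ_t(G)·(Δ(G)|V(H)| + Δ(H)). -/

import Mathlib

namespace PaperPD

open SimpleGraph

variable {V α β : Type*}

/-- Vertices that eventually become blue in the standard zero forcing process
starting from the blue set `B`. -/
inductive ZFClosure (G : SimpleGraph V) (B : Set V) : V → Prop
  | init (v : V) (hv : v ∈ B) : ZFClosure G B v
  | force (u w : V) (hu : ZFClosure G B u) (huw : G.Adj u w)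
      (h : ∀ x, G.Adj u x → x ≠ w → ZFClosure G B x) : ZFClosure G B w

/-- `B` is a zero forcing set of `G`. -/
def IsZeroForcingSet (G : SimpleGraph V) (B : Set V) : Prop :=
  ∀ v, ZFClosure G B v

/-- The zero forcing number `Z(G)`. -/
noncomputable def zeroForcingNumber (G : SimpleGraph V) [Fintype V] : ℕ :=
  sInf {k | ∃ B : Finset V, B.card = k ∧ IsZeroForcingSet G ↑B}

/-- Vertices that eventually become blue in the skew zero forcing process
starting from the blue set `B` (the forcing vertex need not be blue). -/
inductive SkewZFClosure (G : SimpleGraph V) (B : Set V) : V → Prop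
  | init (v : V) (hv : v ∈ B) : SkewZFClosure G B v
  | force (u w : V) (huw : G.Adj u w)
      (h : ∀ x, G.Adj u x → x ≠ w → SkewZFClosure G B x) : SkewZFClosure G B w

/-- `B` is a skew zero forcing set of `G`. -/
def IsSkewZeroForcingSet (G : SimpleGraph V) (B : Set V) : Prop :=
  ∀ v, SkewZFClosure G B v

/-- The skew zero forcing number `Z⁻(G)`. -/
noncomputable def skewZeroForcingNumber (G : SimpleGraph V) [Fintype V] : ℕ :=
  sInf {k | ∃ B : Finset V, B.card = k ∧ IsSkewZeroForcingSet G ↑B}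

/-- The closed neighborhood `N[S]` of a set of vertices. -/
def closedNbhd (G : SimpleGraph V) (S : Set V) : Set V :=
  S ∪ {v | ∃ u ∈ S, G.Adj u v}

/-- `S` is a power dominating set of `G`, i.e. `N[S]` is a zero forcing set. -/
def IsPowerDominatingSet (G : SimpleGraph V) (S : Set V) : Prop :=
  IsZeroForcingSet G (closedNbhd G S)

/-- The power domination number `γ_P(G)`. -/
noncomputable def powerDominationNumber (G : SimpleGraph V) [Fintype V] : ℕ :=
  sInf {k | ∃ S : Finset V, S.card = k ∧ IsPowerDominatingSet G ↑S}

/-- `S` is a dominating set of `G` (`N[S] = V`). -/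
def IsDominatingSet (G : SimpleGraph V) (S : Set V) : Prop :=
  ∀ v, v ∈ closedNbhd G S

/-- The domination number `γ(G)`. -/
noncomputable def dominationNumber (G : SimpleGraph V) [Fintype V] : ℕ :=
  sInf {k | ∃ S : Finset V, S.card = k ∧ IsDominatingSet G ↑S}

/-- `S` is a total dominating set of `G` (`N(S) = V`). -/
def IsTotalDominatingSet (G : SimpleGraph V) (S : Set V) : Prop :=
  ∀ v, ∃ u ∈ S, G.Adj u v

/-- The total domination number `γ_t(G)`. -/
noncomputable def totalDominationNumber (G : SimpleGraph V) [Fintype V] : ℕ :=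
  sInf {k | ∃ S : Finset V, S.card = k ∧ IsTotalDominatingSet G ↑S}

/-- The degree of a vertex. -/
noncomputable def deg (G : SimpleGraph V) (v : V) : ℕ :=
  (G.neighborSet v).ncard

/-- The maximum degree `Δ(G)`. -/
noncomputable def maxDeg (G : SimpleGraph V) [Fintype V] : ℕ :=
  Finset.univ.sup fun v => deg G v

/-- `A` is a symmetric real matrix whose off-diagonal nonzero pattern is
described by the graph `G`, i.e. `A ∈ S(G)`. -/
def MatrixOfGraph (G : SimpleGraph V) (A : Matrix V V ℝ) : Prop :=
  A.IsSymm ∧ ∀ i j, i ≠ j → (A i j ≠ 0 ↔ G.Adj i j)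

/-- The nullity of a square real matrix. -/
noncomputable def nullity [Fintype V] [DecidableEq V] (A : Matrix V V ℝ) : ℕ :=
  Fintype.card V - A.rank

/-- The maximum nullity `M(G)`. -/
noncomputable def maxNullity (G : SimpleGraph V) [Fintype V] [DecidableEq V] : ℕ :=
  sSup {k | ∃ A : Matrix V V ℝ, MatrixOfGraph G A ∧ nullity A = k}

/-- The tensor (direct) product of two simple graphs. -/
def tensorProd (G : SimpleGraph α) (H : SimpleGraph β) : SimpleGraph (α × β) where
  Adj p q := G.Adj p.1 q.1 ∧ H.Adj p.2 q.2
  symm := ⟨fun _ _ h => ⟨h.1.symm, h.2.symm⟩⟩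
  loopless := ⟨fun p h => G.loopless.irrefl p.1 h.1⟩

/-- The lexicographic product of two simple graphs. -/
def lexProd (G : SimpleGraph α) (H : SimpleGraph β) : SimpleGraph (α × β) where
  Adj p q := G.Adj p.1 q.1 ∨ (p.1 = q.1 ∧ H.Adj p.2 q.2)
  symm := ⟨fun _ _ h => h.elim (fun h' => Or.inl h'.symm) (fun h' => Or.inr ⟨h'.1.symm, h'.2.symm⟩)⟩
  loopless := ⟨fun p h => h.elim (fun h' => G.loopless.irrefl p.1 h') (fun h' => H.loopless.irrefl p.2 h'.2)⟩

/-!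
Colouring `N[s]` blue except for one neighbour of `s` costs `deg s` vertices, and `s` then forces the
missing neighbour. Doing this at every vertex of a power dominating set gives `Z ≤ γ_P · Δ` for a
graph with at least one edge. In `G * H`, the set `N[S × T]` with `T` nonempty contains the whole
layer over every neighbour of `S`, so a layer over `s ∈ S` evolves exactly as `H` does from `N[T]`.
Therefore `S × T` is power dominating if `S` dominates `G` and `T` power dominates `H`. If `S` totally
dominates `G`, every layer is blue from the start and a single vertex of `H` suffices as `T`.
-/

section ZeroForcing

variable {G : SimpleGraph V} {B C : Set V} {v : V}

theorem ZFClosure.trans (hBC : ∀ u ∈ B, ZFClosure G C u) (hv : ZFClosure G B v) :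
    ZFClosure G C v := by
  induction hv with
  | init v hv => exact hBC v hv
  | force u w _ huw _ ihu ih => exact .force u w ihu huw ih

theorem ZFClosure.mono (hBC : B ⊆ C) (hv : ZFClosure G B v) : ZFClosure G C v :=
  hv.trans fun u hu ↦ .init u (hBC hu)

theorem ZFClosure.nonempty (hv : ZFClosure G B v) : B.Nonempty := by
  induction hv with
  | init v hv => exact ⟨v, hv⟩
  | force _ _ _ _ _ ihu _ => exact ihu

theorem IsZeroForcingSet.zeroForcingNumber_le_card [Fintype V] {B : Finset V}
    (hB : IsZeroForcingSet G ↑B) : zeroForcingNumber G ≤ B.card :=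
  Nat.sInf_le ⟨B, rfl, hB⟩

end ZeroForcing

section Domination

theorem mem_closedNbhd_iff_exists_singleton {G : SimpleGraph V} {S : Set V} {v : V} :
    v ∈ closedNbhd G S ↔ ∃ s ∈ S, v ∈ closedNbhd G {s} := by
  simp only [closedNbhd, Set.mem_union, Set.mem_ofPred_eq, Set.mem_singleton_iff, exists_eq_left,
    and_or_left, exists_or, exists_eq_right']

theorem IsPowerDominatingSet.powerDominationNumber_le_card [Fintype V] {G : SimpleGraph V}
    {S : Finset V} (hS : IsPowerDominatingSet G ↑S) : powerDominationNumber G ≤ S.card :=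
  Nat.sInf_le ⟨S, rfl, hS⟩

theorem exists_finset_card_eq_sInf {P : Finset V → Prop} (hP : ∃ S, P S) :
    ∃ S, S.card = sInf {k | ∃ S : Finset V, S.card = k ∧ P S} ∧ P S :=
  let ⟨S, hS⟩ := hP
  Nat.sInf_mem (s := {k | ∃ S : Finset V, S.card = k ∧ P S}) ⟨S.card, S, rfl, hS⟩

variable [Fintype V] (G : SimpleGraph V)

theorem exists_isPowerDominatingSet_card_eq :
    ∃ S : Finset V, S.card = powerDominationNumber G ∧ IsPowerDominatingSet G ↑S :=
  exists_finset_card_eq_sInf ⟨Finset.univ, fun v ↦ .init v (.inl (Finset.mem_univ v))⟩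

theorem exists_isDominatingSet_card_eq :
    ∃ S : Finset V, S.card = dominationNumber G ∧ IsDominatingSet G ↑S :=
  exists_finset_card_eq_sInf ⟨Finset.univ, fun v ↦ .inl (Finset.mem_univ v)⟩

variable {G} in
theorem exists_isTotalDominatingSet_card_eq (hG : ∀ v, ∃ u, G.Adj u v) :
    ∃ S : Finset V, S.card = totalDominationNumber G ∧ IsTotalDominatingSet G ↑S :=
  exists_finset_card_eq_sInf ⟨Finset.univ,
    fun v ↦ (hG v).imp fun u huv ↦ ⟨Finset.mem_univ u, huv⟩⟩

end Domination

section MaxDegree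

theorem deg_le_maxDeg [Fintype V] (G : SimpleGraph V) (v : V) : deg G v ≤ maxDeg G :=
  Finset.le_sup (f := deg G) (Finset.mem_univ v)

theorem maxDeg_pos_of_adj [Fintype V] {G : SimpleGraph V} {u v : V} (huv : G.Adj u v) :
    0 < maxDeg G :=
  ((Set.ncard_pos (Set.toFinite _)).2 ⟨v, huv⟩).trans_le (deg_le_maxDeg G u)

theorem ncard_closedNbhd_singleton_diff {G : SimpleGraph V} {s w : V} (hw : G.Adj s w) :
    (closedNbhd G {s} \ {w}).ncard = deg G s := by
  have hdiff : closedNbhd G {s} \ {w} = insert s (G.neighborSet s \ {w}) := by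
    ext v
    simp only [closedNbhd, Set.mem_sdiff, Set.mem_union, Set.mem_ofPred_eq, Set.mem_singleton_iff,
      exists_eq_left, Set.mem_insert_iff, mem_neighborSet]
    grind [hw.ne]
  rw [hdiff, Set.ncard_exchange (s := G.neighborSet s) G.notMem_neighborSet_self hw, deg]

theorem ZFClosure.of_mem_closedNbhd_singleton {G : SimpleGraph V} {s w v : V} (hw : G.Adj s w)
    (hv : v ∈ closedNbhd G {s}) : ZFClosure G (closedNbhd G {s} \ {w}) v := by
  by_cases hvw : v = w
  · subst hvw
    exact .force s v (.init s ⟨.inl rfl, hw.ne⟩) hw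
      fun x hsx hxv ↦ .init x ⟨.inr ⟨s, rfl, hsx⟩, hxv⟩
  · exact .init v ⟨hv, hvw⟩

variable [Fintype V] {G : SimpleGraph V}

theorem exists_card_le_maxDeg_forcing_closedNbhd (hG : 0 < maxDeg G) (s : V) :
    ∃ B : Finset V, B.card ≤ maxDeg G ∧ ∀ v ∈ closedNbhd G {s}, ZFClosure G ↑B v := by
  classical
  by_cases hs : ∃ w, G.Adj s w
  · obtain ⟨w, hw⟩ := hs
    refine ⟨(closedNbhd G {s} \ {w}).toFinset, ?_, fun v hv ↦ ?_⟩
    · rw [← Set.ncard_eq_toFinset_card', ncard_closedNbhd_singleton_diff hw]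
      exact deg_le_maxDeg G s
    · rw [Set.coe_toFinset]
      exact .of_mem_closedNbhd_singleton hw hv
  · refine ⟨{s}, hG, ?_⟩
    rintro v (rfl | ⟨_, rfl, hsv⟩)
    · exact .init v (Finset.mem_singleton_self v)
    · exact absurd ⟨v, hsv⟩ hs

theorem zeroForcingNumber_le_powerDominationNumber_mul_maxDeg (hG : 0 < maxDeg G) :
    zeroForcingNumber G ≤ powerDominationNumber G * maxDeg G := by
  classical
  obtain ⟨S, hcard, hS⟩ := exists_isPowerDominatingSet_card_eq G
  choose B hBcard hB using exists_card_le_maxDeg_forcing_closedNbhd hG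
  have hforcing : IsZeroForcingSet G ↑(S.biUnion B) := by
    refine fun v ↦ (hS v).trans fun u hu ↦ ?_
    obtain ⟨s, hs, hus⟩ := mem_closedNbhd_iff_exists_singleton.1 hu
    exact (hB s u hus).mono (Finset.coe_subset.2 (Finset.subset_biUnion_of_mem B hs))
  calc zeroForcingNumber G ≤ (S.biUnion B).card := hforcing.zeroForcingNumber_le_card
    _ ≤ S.card * maxDeg G := Finset.card_biUnion_le_card_mul _ _ _ fun s _ ↦ hBcard s
    _ = powerDominationNumber G * maxDeg G := by rw [hcard]

end MaxDegree

section LexProd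

variable {G : SimpleGraph α} {H : SimpleGraph β} {S : Set α} {T : Set β}

theorem neighborSet_lexProd (G : SimpleGraph α) (H : SimpleGraph β) (p : α × β) :
    (lexProd G H).neighborSet p = G.neighborSet p.1 ×ˢ .univ ∪ {p.1} ×ˢ H.neighborSet p.2 := by
  ext q
  simp [lexProd, eq_comm]

theorem deg_lexProd [Finite α] [Finite β] (G : SimpleGraph α) (H : SimpleGraph β) (p : α × β) :
    deg (lexProd G H) p = deg G p.1 * Nat.card β + deg H p.2 := by
  have hdisj : Disjoint (G.neighborSet p.1 ×ˢ (.univ : Set β)) ({p.1} ×ˢ H.neighborSet p.2) :=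
    Set.disjoint_prod.2 (.inl (Set.disjoint_singleton_right.2 G.notMem_neighborSet_self))
  rw [deg, neighborSet_lexProd, Set.ncard_union_eq hdisj, Set.ncard_prod, Set.ncard_prod,
    Set.ncard_univ, Set.ncard_singleton, one_mul, deg, deg]

theorem maxDeg_lexProd_le [Fintype α] [Fintype β] (G : SimpleGraph α) (H : SimpleGraph β) :
    maxDeg (lexProd G H) ≤ maxDeg G * Fintype.card β + maxDeg H := by
  refine Finset.sup_le fun p _ ↦ ?_
  rw [deg_lexProd, Nat.card_eq_fintype_card]
  gcongr <;> apply deg_le_maxDeg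

theorem mk_mem_closedNbhd_lexProd_of_adj {u v : α} (hu : u ∈ S) (huv : G.Adj u v)
    (hT : T.Nonempty) (b : β) : (v, b) ∈ closedNbhd (lexProd G H) (S ×ˢ T) :=
  let ⟨t, ht⟩ := hT
  .inr ⟨(u, t), ⟨hu, ht⟩, .inl huv⟩

theorem mk_mem_closedNbhd_lexProd_of_mem {s : α} {b : β} (hs : s ∈ S)
    (hb : b ∈ closedNbhd H T) : (s, b) ∈ closedNbhd (lexProd G H) (S ×ˢ T) := by
  obtain hb | ⟨t, ht, htb⟩ := hb
  · exact .inl ⟨hs, hb⟩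
  · exact .inr ⟨(s, t), ⟨hs, ht⟩, .inr ⟨rfl, htb⟩⟩

theorem ZFClosure.lexProd_mk {C : Set (α × β)} {A : Set β} {s : α} {b : β}
    (hnbr : ∀ x, G.Adj s x → ∀ c, ZFClosure (lexProd G H) C (x, c))
    (hA : ∀ a ∈ A, ZFClosure (lexProd G H) C (s, a)) (hb : ZFClosure H A b) :
    ZFClosure (lexProd G H) C (s, b) := by
  induction hb with
  | init a ha => exact hA a ha
  | force u w _ huw _ ihu ih =>
    refine .force (s, u) (s, w) ihu (.inr ⟨rfl, huw⟩) ?_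
    rintro ⟨x, c⟩ (hsx | ⟨rfl, huc⟩) hne
    · exact hnbr x hsx c
    · exact ih c huc fun hcw ↦ hne (congrArg _ hcw)

theorem IsDominatingSet.isPowerDominatingSet_prod (hS : IsDominatingSet G S)
    (hT : IsPowerDominatingSet H T) : IsPowerDominatingSet (lexProd G H) (S ×ˢ T) := by
  rintro ⟨v, b⟩
  have hT_nonempty : T.Nonempty := by
    obtain ⟨c, hc⟩ := (hT b).nonempty
    exact (mem_closedNbhd_iff_exists_singleton.1 hc).imp fun _ ht ↦ ht.1
  have hlayer {u x : α} (hu : u ∈ S) (hux : G.Adj u x) (c : β) :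
      ZFClosure (lexProd G H) (closedNbhd (lexProd G H) (S ×ˢ T)) (x, c) :=
    .init _ (mk_mem_closedNbhd_lexProd_of_adj hu hux hT_nonempty c)
  obtain hv | ⟨u, hu, huv⟩ := hS v
  · exact .lexProd_mk (fun x ↦ hlayer hv)
      (fun c hc ↦ .init _ (mk_mem_closedNbhd_lexProd_of_mem hv hc)) (hT b)
  · exact hlayer hu huv b

theorem IsTotalDominatingSet.isPowerDominatingSet_prod (hS : IsTotalDominatingSet G S)
    (hT : T.Nonempty) : IsPowerDominatingSet (lexProd G H) (S ×ˢ T) := by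
  rintro ⟨v, b⟩
  obtain ⟨u, hu, huv⟩ := hS v
  exact .init _ (mk_mem_closedNbhd_lexProd_of_adj hu huv hT b)

variable [Fintype α] [Fintype β]

theorem powerDominationNumber_lexProd_le_dominationNumber_mul
    (G : SimpleGraph α) (H : SimpleGraph β) :
    powerDominationNumber (lexProd G H) ≤ dominationNumber G * powerDominationNumber H := by
  obtain ⟨S, hScard, hS⟩ := exists_isDominatingSet_card_eq G
  obtain ⟨T, hTcard, hT⟩ := exists_isPowerDominatingSet_card_eq H
  have hST : IsPowerDominatingSet (lexProd G H) ↑(S ×ˢ T) := by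
    rw [Finset.coe_product]
    exact hS.isPowerDominatingSet_prod hT
  simpa only [Finset.card_product, hScard, hTcard] using hST.powerDominationNumber_le_card

theorem powerDominationNumber_lexProd_le_totalDominationNumber
    (hG : ∀ v, ∃ u, G.Adj u v) (H : SimpleGraph β) :
    powerDominationNumber (lexProd G H) ≤ totalDominationNumber G := by
  obtain ⟨S, hScard, hS⟩ := exists_isTotalDominatingSet_card_eq hG
  cases isEmpty_or_nonempty β with
  | inl _ =>
    have hempty : IsPowerDominatingSet (lexProd G H) ↑(∅ : Finset (α × β)) := isEmptyElim
    exact hempty.powerDominationNumber_le_card.trans (Nat.zero_le _)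
  | inr hβ =>
    obtain ⟨t⟩ := hβ
    have hSt : IsPowerDominatingSet (lexProd G H) ↑(S ×ˢ {t}) := by
      rw [Finset.coe_product]
      exact hS.isPowerDominatingSet_prod (Finset.singleton_nonempty t)
    simpa only [Finset.card_product, hScard, Finset.card_singleton, mul_one] using
      hSt.powerDominationNumber_le_card

end LexProd

theorem stmt16_general {α β : Type*} [Fintype α] [Fintype β]
    (G : SimpleGraph α) (H : SimpleGraph β)
    (hE : ∃ p q, (lexProd G H).Adj p q) :
    zeroForcingNumber (lexProd G H) ≤
        dominationNumber G * powerDominationNumber H *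
          (maxDeg G * Fintype.card β + maxDeg H) ∧
    ((∀ v, ∃ u, G.Adj u v) →
      zeroForcingNumber (lexProd G H) ≤
        totalDominationNumber G * (maxDeg G * Fintype.card β + maxDeg H)) := by
  obtain ⟨p, q, hpq⟩ := hE
  have hZ := zeroForcingNumber_le_powerDominationNumber_mul_maxDeg (maxDeg_pos_of_adj hpq)
  have hΔ := maxDeg_lexProd_le G H
  exact ⟨hZ.trans (Nat.mul_le_mul (powerDominationNumber_lexProd_le_dominationNumber_mul G H) hΔ),
    fun hG ↦
      hZ.trans (Nat.mul_le_mul (powerDominationNumber_lexProd_le_totalDominationNumber hG H) hΔ)⟩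

/-- If `G*H` has an edge, then `Z(G*H) ≤ γ(G)(Δ(G)|V(H)| + Δ(H))`
when `γ_P(H) = 1`, and `Z(G*H) ≤ γ_t(G)(Δ(G)|V(H)| + Δ(H))` when `γ_P(H) ≥ 2`
and `G` has no isolated vertices. -/
theorem stmt16 {α β : Type*} [Fintype α] [Fintype β]
    (G : SimpleGraph α) (H : SimpleGraph β)
    (hE : ∃ p q, (lexProd G H).Adj p q) :
    (powerDominationNumber H = 1 →
      zeroForcingNumber (lexProd G H) ≤
        dominationNumber G * (maxDeg G * Fintype.card β + maxDeg H)) ∧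
    (2 ≤ powerDominationNumber H → (∀ v, ∃ u, G.Adj u v) →
      zeroForcingNumber (lexProd G H) ≤
        totalDominationNumber G * (maxDeg G * Fintype.card β + maxDeg H)) := by
  obtain ⟨hγ, hγt⟩ := stmt16_general G H hE
  exact ⟨fun hP ↦ by rwa [hP, mul_one] at hγ, fun _ ↦ hγt⟩

end PaperPD
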